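/- In the critical-execution setting (a recoverable wait-free binary consensus algorithm for the n processes, a configuration C, an integer z ≥ 1, and α ∈ 𝓔*_z(C) critical with respect to 𝓔*_z(C)), let O be the object that every process is poised to access in Cα, and suppose p_{n−1} is on team 1−v in Cα for some v ∈ {0,1}. If there exist a process p_i on team v in Cα, a process p_j on team 1−v in Cα, a schedule R_i ∈ 𝒮(𝒫 − {p_i}), and a schedule R_j ∈ 𝒮(𝒫 − {p_j}) such that value(O, Cα p_iR_i) = value(O, Cα p_jR_j), then p_j = p_{n−1} and R_j = ⟨⟩. -/

import Mathlib

/-!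
Suppose `j ≠ n-1` or `R_j` is nonempty. Then both `p_i R_i` and `p_j R_j` contain a step of some
process below `p_{n-1}` (for the former because `i ≠ n-1`: the two are on different teams), so
a crash of `p_{n-1}` is legal after either of them (`crash_mem`). All steps taken access `O` only
(`run_oval_of_ne`), so the resulting two configurations agree on every object, and after the
crash also on the state of `p_{n-1}`. Hence the solo run of `p_{n-1}`, which decides by
recoverable wait-freedom, decides the same value in both (`run_solo_congr`). This contradicts
`solo_decision`: one execution extends a `v`-univalent one and the other a `¬v`-univalent one.
-/

namespace RecoverableConsensus

/-- A deterministic object type: a set of values, operations and responses together with a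
transition function assigning to each (value, operation) pair a unique response and a unique
resulting value. -/
structure DetType : Type 1 where
  Value : Type
  Op : Type
  Resp : Type
  δ : Value → Op → Resp × Value

/-- A type is readable if it has a Read operation that returns (an injective encoding of)
the current value of the object without changing it. -/
def Readable (T : DetType) : Prop :=
  ∃ (read : T.Op) (ι : T.Value → T.Resp),
    Function.Injective ι ∧ ∀ v, T.δ v read = (ι v, v)

/-- The register type over the value set `V`: the operation `none` is Read (returning the
current value without changing it) and `some v` is Write(v) (changing the value to `v`). -/
def RegisterType (V : Type) : DetType where
  Value := V
  Op := Option V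
  Resp := V
  δ := fun u op =>
    match op with
    | none => (u, u)
    | some v => (v, v)

def IsRegister (T : DetType) : Prop := ∃ V : Type, T = RegisterType V

/-- An event is either a step by a process or a crash of a process. -/
inductive Event (n : ℕ) : Type where
  | step : Fin n → Event n
  | crash : Fin n → Event n
deriving DecidableEq

/-- An algorithm for `n` processes: a collection of shared objects, each with a deterministic
type and an initial value, and for each process a deterministic state machine with an initial
state depending on the process's binary input.  Each state determines the process's next step
(`pending`: an operation applied to a designated object, or `none` for a no-op); the state
reached after a step is determined by the current state and the response received (`next`).
`output i s = some v` means that `s` is an output state of process `i` for the value `v`;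
processes in output states take only no-op steps. -/
structure Algorithm (n : ℕ) : Type 1 where
  ObjIdx : Type
  objType : ObjIdx → DetType
  objInit : (o : ObjIdx) → (objType o).Value
  PState : Fin n → Type
  init : (i : Fin n) → Bool → PState i
  pending : (i : Fin n) → PState i → Option ((o : ObjIdx) × (objType o).Op)
  next : (i : Fin n) → PState i → (o : ObjIdx) → (objType o).Resp → PState i
  output : (i : Fin n) → PState i → Option Bool
  output_noop : ∀ i s, output i s ≠ none → pending i s = none

/-- A configuration assigns a state to each process and a value to each object. -/
structure Config {n : ℕ} (A : Algorithm n) : Type where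
  pstate : (i : Fin n) → A.PState i
  oval : (o : A.ObjIdx) → (A.objType o).Value

variable {n : ℕ}

/-- The effect of one event on a configuration.  A crash of `p_i` resets `p_i` to its initial
state (for its input) and leaves all object values unchanged; a step of `p_i` applies its
pending operation (if any) to the designated object, receiving the response determined by the
type's transition function. -/
noncomputable def applyEvent (A : Algorithm n) (input : Fin n → Bool) (C : Config A) :
    Event n → Config A
  | .crash i => { C with pstate := Function.update C.pstate i (A.init i (input i)) }
  | .step i =>
    letI : DecidableEq A.ObjIdx := Classical.decEq _
    match A.pending i (C.pstate i) with
    | none => C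
    | some ⟨o, op⟩ =>
      { pstate := Function.update C.pstate i
          (A.next i (C.pstate i) o ((A.objType o).δ (C.oval o) op).1),
        oval := Function.update C.oval o ((A.objType o).δ (C.oval o) op).2 }

/-- Since the algorithm is deterministic, a finite execution from `C` is determined by its
schedule, i.e. its list of events; `run A input C σ` is the configuration `Cσ` reached by
applying the events of `σ` in order from `C`. -/
noncomputable def run (A : Algorithm n) (input : Fin n → Bool) (C : Config A) :
    List (Event n) → Config A
  | [] => C
  | e :: σ => run A input (applyEvent A input C e) σ

/-- The initial configuration: every process in its initial state, every object at its
initial value. -/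
def initConfig (A : Algorithm n) (input : Fin n → Bool) : Config A :=
  ⟨fun i => A.init i (input i), A.objInit⟩

/-- Process `i` has decided `v` in `Cσ`: at some point along the execution `σ` from `C`,
process `i` was in an output state for `v`. -/
def HasDecided (A : Algorithm n) (input : Fin n → Bool) (C : Config A)
    (σ : List (Event n)) (i : Fin n) (v : Bool) : Prop :=
  ∃ τ, τ <+: σ ∧ A.output i ((run A input C τ).pstate i) = some v

def CrashFree (σ : List (Event n)) : Prop := ∀ i : Fin n, Event.crash i ∉ σ

/-- The first `k` events of an infinite execution. -/
def initSeg (e : ℕ → Event n) (k : ℕ) : List (Event n) := (List.range k).map e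

/-- Agreement: in every execution no two processes decide different values. -/
def Agreement (A : Algorithm n) : Prop :=
  ∀ (input : Fin n → Bool) (σ : List (Event n)) (i j : Fin n) (v w : Bool),
    HasDecided A input (initConfig A input) σ i v →
    HasDecided A input (initConfig A input) σ j w → v = w

/-- Validity: every decided value is the input of some process. -/
def Validity (A : Algorithm n) : Prop :=
  ∀ (input : Fin n → Bool) (σ : List (Event n)) (i : Fin n) (v : Bool),
    HasDecided A input (initConfig A input) σ i v → ∃ j, input j = v

/-- Recoverable wait-freedom: every process, starting from its initial state, either crashes
or decides within a finite number of its own steps.  Equivalently: in every infinite execution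
in which process `i` starts at (or is reset by a crash to) its initial state, takes infinitely
many steps and crashes only finitely often, it eventually reaches an output state. -/
def RecWaitFree (A : Algorithm n) : Prop :=
  ∀ (input : Fin n → Bool) (C : Config A) (e : ℕ → Event n) (i : Fin n),
    (C.pstate i = A.init i (input i) ∨ ∃ k, e k = Event.crash i) →
    (∀ m, ∃ k, m ≤ k ∧ e k = Event.step i) →
    (∃ m, ∀ k, m ≤ k → e k ≠ Event.crash i) →
    ∃ (k : ℕ) (v : Bool), A.output i ((run A input C (initSeg e k)).pstate i) = some v

/-- A recoverable wait-free binary consensus algorithm. -/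
def SolvesRecConsensus (A : Algorithm n) : Prop :=
  Agreement A ∧ Validity A ∧ RecWaitFree A

/-- Agreement restricted to crash-free executions. -/
def AgreementCF (A : Algorithm n) : Prop :=
  ∀ (input : Fin n → Bool) (σ : List (Event n)), CrashFree σ →
    ∀ (i j : Fin n) (v w : Bool),
      HasDecided A input (initConfig A input) σ i v →
      HasDecided A input (initConfig A input) σ j w → v = w

/-- Validity restricted to crash-free executions. -/
def ValidityCF (A : Algorithm n) : Prop :=
  ∀ (input : Fin n → Bool) (σ : List (Event n)), CrashFree σ →
    ∀ (i : Fin n) (v : Bool),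
      HasDecided A input (initConfig A input) σ i v → ∃ j, input j = v

/-- Wait-freedom: in crash-free executions, every process that takes infinitely many steps
decides. -/
def WaitFree (A : Algorithm n) : Prop :=
  ∀ (input : Fin n → Bool) (e : ℕ → Event n),
    (∀ (k : ℕ) (i : Fin n), e k ≠ Event.crash i) →
    ∀ i : Fin n, (∀ m, ∃ k, m ≤ k ∧ e k = Event.step i) →
    ∃ (k : ℕ) (v : Bool),
      A.output i ((run A input (initConfig A input) (initSeg e k)).pstate i) = some v

/-- A wait-free binary consensus algorithm (for the model in which crashes are permanent,
i.e. only crash-free executions are relevant). -/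
def SolvesWFConsensus (A : Algorithm n) : Prop :=
  AgreementCF A ∧ ValidityCF A ∧ WaitFree A

/-- The number of crashes of process `i` in `σ`. -/
def crashCount (i : Fin n) (σ : List (Event n)) : ℕ :=
  (σ.filter fun e => decide (e = Event.crash i)).length

def isStepBelow (i : Fin n) : Event n → Bool
  | .step j => decide (j < i)
  | .crash _ => false

/-- The total number of steps taken by processes `p_0, …, p_{i-1}` in `σ`. -/
def stepsBelow (i : Fin n) (σ : List (Event n)) : ℕ := (σ.filter (isStepBelow i)).length

/-- The crash bound: for every process `p_i`, the number of crashes of `p_i` is at most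
`z·n` times the total number of steps of `p_0, …, p_{i-1}` (for `i = 0` this says that `p_0`
never crashes). -/
def EMem (z : ℕ) (σ : List (Event n)) : Prop :=
  ∀ i : Fin n, crashCount i σ ≤ z * n * stepsBelow i σ

/-- `𝓔_z`: executions satisfying the crash bound. -/
def ESet (n z : ℕ) : Set (List (Event n)) := { σ | EMem z σ }

/-- `𝓔*_z`: executions satisfying the crash bound in every prefix. -/
def EStarSet (n z : ℕ) : Set (List (Event n)) := { σ | ∀ τ, τ <+: σ → EMem z τ }

/-- `e` is an event by a process in `P`. -/
def eventBy (P : Set (Fin n)) : Event n → Prop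
  | .step i => i ∈ P
  | .crash i => i ∈ P

/-- The set of processes `P` is `v`-univalent in the execution `α` from `C` with respect to
the set of executions `𝒜`. -/
def VUnivalentIn (A : Algorithm n) (input : Fin n → Bool) (C : Config A)
    (𝒜 : Set (List (Event n))) (P : Set (Fin n)) (α : List (Event n)) (v : Bool) : Prop :=
  α ∈ 𝒜 ∧ ∀ β : List (Event n), (∀ e ∈ β, eventBy P e) → (α ++ β) ∈ 𝒜 →
    ∀ (i : Fin n) (w : Bool), HasDecided A input C (α ++ β) i w → w = v

/-- The set of processes `P` is bivalent in the execution `α` from `C` with respect to `𝒜`. -/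
def BivalentIn (A : Algorithm n) (input : Fin n → Bool) (C : Config A)
    (𝒜 : Set (List (Event n))) (P : Set (Fin n)) (α : List (Event n)) : Prop :=
  ∀ v : Bool, ∃ β : List (Event n), (∀ e ∈ β, eventBy P e) ∧ (α ++ β) ∈ 𝒜 ∧
    ∃ i : Fin n, HasDecided A input C (α ++ β) i v

/-- `P` is univalent in `α` with respect to `𝒜`: `v`-univalent for some `v`. -/
def UnivalentIn (A : Algorithm n) (input : Fin n → Bool) (C : Config A)
    (𝒜 : Set (List (Event n))) (P : Set (Fin n)) (α : List (Event n)) : Prop :=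
  ∃ v : Bool, VUnivalentIn A input C 𝒜 P α v

/-- `α ∈ 𝒜` is critical with respect to `𝒜`: `α` is bivalent with respect to `𝒜` and every
nonempty extension of `α` inside `𝒜` is univalent with respect to `𝒜`. -/
def Critical (A : Algorithm n) (input : Fin n → Bool) (C : Config A)
    (𝒜 : Set (List (Event n))) (α : List (Event n)) : Prop :=
  α ∈ 𝒜 ∧ BivalentIn A input C 𝒜 Set.univ α ∧
  ∀ β : List (Event n), β ≠ [] → (α ++ β) ∈ 𝒜 → UnivalentIn A input C 𝒜 Set.univ (α ++ β)

/-- Process `i` is on team `v` in `Cα` (with respect to `𝒜`): `α p_i` is `v`-univalent. -/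
def OnTeam (A : Algorithm n) (input : Fin n → Bool) (C : Config A)
    (𝒜 : Set (List (Event n))) (α : List (Event n)) (i : Fin n) (v : Bool) : Prop :=
  VUnivalentIn A input C 𝒜 Set.univ (α ++ [Event.step i]) v

/-- Process `i` is poised to apply an operation to object `O` in configuration `C`. -/
def PoisedAt (A : Algorithm n) (C : Config A) (i : Fin n) (O : A.ObjIdx) : Prop :=
  ∃ op, A.pending i (C.pstate i) = some ⟨O, op⟩

/-- `σ ∈ 𝒮(P)`: a crash-free schedule in which each process of `P` takes at most one step
and no other process takes a step. -/
def IsSched (P : Set (Fin n)) (σ : List (Event n)) : Prop :=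
  ∃ l : List (Fin n), l.Nodup ∧ (∀ j ∈ l, j ∈ P) ∧ σ = l.map Event.step

/-- The schedule `λ_k = c_k c_{k+1} ⋯ c_{n-1}`. -/
def lambdaSched (n k : ℕ) : List (Event n) :=
  ((List.finRange n).filter fun j => decide (k ≤ j.val)).map Event.crash

/-- `U_v`: the set of values of object `O` reachable from `Dα` by a schedule in `𝒮(𝒫)`
whose first process is on team `v`. -/
def USetCfg (A : Algorithm n) (input : Fin n → Bool) (D : Config A)
    (𝒜 : Set (List (Event n))) (α : List (Event n)) (O : A.ObjIdx) (v : Bool) :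
    Set (A.objType O).Value :=
  { w | ∃ (j : Fin n) (σ : List (Event n)), OnTeam A input D 𝒜 α j v ∧
        IsSched {k : Fin n | k ≠ j} σ ∧
        w = (run A input D (α ++ Event.step j :: σ)).oval O }

/-- The configuration `Dα` is `v`-hiding. -/
def VHiding (A : Algorithm n) (input : Fin n → Bool) (D : Config A)
    (𝒜 : Set (List (Event n))) (α : List (Event n)) (O : A.ObjIdx) (v : Bool) : Prop :=
  USetCfg A input D 𝒜 α O false ∩ USetCfg A input D 𝒜 α O true = ∅ ∧
  (run A input D α).oval O ∈ USetCfg A input D 𝒜 α O v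

/-- The configuration `Dα` is `n`-recording. -/
def NRecordingCfg (A : Algorithm n) (input : Fin n → Bool) (D : Config A)
    (𝒜 : Set (List (Event n))) (α : List (Event n)) (O : A.ObjIdx) : Prop :=
  USetCfg A input D 𝒜 α O false ∩ USetCfg A input D 𝒜 α O true = ∅ ∧
  ∀ v : Bool, (run A input D α).oval O ∈ USetCfg A input D 𝒜 α O v →
    ∃! j : Fin n, OnTeam A input D 𝒜 α j (!v)

/-- Apply the operations `o i` of the processes listed in `σ`, in order, to an object of type
`T`, starting from the value `u`. -/
def applyOps (T : DetType) (o : Fin n → T.Op) : T.Value → List (Fin n) → T.Value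
  | u, [] => u
  | u, i :: σ => applyOps T o (T.δ u (o i)).2 σ

/-- `U_x`: the set of values obtainable by applying the operations of the processes of a
duplicate-free schedule whose first process is on team `x` to an object with initial value
`u`. -/
def UVals (T : DetType) (o : Fin n → T.Op) (u : T.Value) (team : Fin n → Bool) (x : Bool) :
    Set T.Value :=
  { v | ∃ (i : Fin n) (σ : List (Fin n)), team i = x ∧ (i :: σ).Nodup ∧
        v = applyOps T o u (i :: σ) }

/-- A deterministic type `T` is `n`-recording. -/
def NRecording (n : ℕ) (T : DetType) : Prop :=
  ∃ (u : T.Value) (team : Fin n → Bool) (o : Fin n → T.Op),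
    (∀ x : Bool, ∃ i, team i = x) ∧
    (UVals T o u team false ∩ UVals T o u team true = ∅) ∧
    (∀ x : Bool, u ∈ UVals T o u team x → ∃! i, team i = !x)

end RecoverableConsensus

namespace RecoverableConsensus

variable {n : ℕ}

lemma run_append (A : Algorithm n) (input : Fin n → Bool) (C : Config A)
    (σ τ : List (Event n)) :
    run A input C (σ ++ τ) = run A input (run A input C σ) τ := by
  induction σ generalizing C with
  | nil => rfl
  | cons e σ ih => exact ih _

lemma step_pstate_of_ne (A : Algorithm n) (input : Fin n → Bool) (C : Config A)
    {p q : Fin n} (h : q ≠ p) :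
    (applyEvent A input C (.step p)).pstate q = C.pstate q := by
  simp only [applyEvent]
  split
  · rfl
  · simp [h]

lemma step_oval_of_ne (A : Algorithm n) (input : Fin n → Bool) (C : Config A)
    {p : Fin n} {O o : A.ObjIdx} (hp : PoisedAt A C p O) (h : o ≠ O) :
    (applyEvent A input C (.step p)).oval o = C.oval o := by
  obtain ⟨op, hop⟩ := hp
  simp only [applyEvent, hop]
  simp [h]

/-- When every listed process is poised at `O` and takes a single step, no object other
than `O` changes. -/
lemma run_oval_of_ne (A : Algorithm n) (input : Fin n → Bool) (C : Config A)
    {O o : A.ObjIdx} (h : o ≠ O) (l : List (Fin n)) (hl : l.Nodup)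
    (hp : ∀ p ∈ l, PoisedAt A C p O) :
    (run A input C (l.map Event.step)).oval o = C.oval o := by
  induction l generalizing C with
  | nil => rfl
  | cons p l ih =>
    rw [List.nodup_cons] at hl
    have := ih (applyEvent A input C (.step p)) hl.2 (by
      intro q hq
      have hne : q ≠ p := by rintro rfl; exact hl.1 hq
      have := hp q (by simp [hq])
      simpa only [PoisedAt, step_pstate_of_ne A input C hne] using this)
    exact this.trans (step_oval_of_ne A input C (hp p (by simp)) h)

/-- A solo run of `p` depends only on the object values and on the state of `p`. -/
lemma run_solo_congr (A : Algorithm n) (input : Fin n → Bool) (p : Fin n) (k : ℕ)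
    (C D : Config A) (ho : C.oval = D.oval) (hs : C.pstate p = D.pstate p) :
    (run A input C (List.replicate k (.step p))).pstate p =
      (run A input D (List.replicate k (.step p))).pstate p := by
  induction k generalizing C D with
  | zero => exact hs
  | succ k ih =>
    refine ih _ _ ?_ ?_
    · simp only [applyEvent, hs, ho]
      split <;> simp [ho]
    · simp only [applyEvent, hs, ho]
      split <;> simp [hs]

lemma stepsBelow_append (p : Fin n) (σ τ : List (Event n)) :
    stepsBelow p (σ ++ τ) = stepsBelow p σ + stepsBelow p τ := by
  simp [stepsBelow]

lemma crashCount_append (p : Fin n) (σ τ : List (Event n)) :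
    crashCount p (σ ++ τ) = crashCount p σ + crashCount p τ := by
  simp [crashCount]

lemma crashCount_steps (p : Fin n) (l : List (Fin n)) :
    crashCount p (l.map Event.step) = 0 := by
  simp [crashCount]

lemma EStarSet.snoc {z : ℕ} {σ : List (Event n)} {e : Event n}
    (h : σ ∈ EStarSet n z) (he : EMem z (σ ++ [e])) : σ ++ [e] ∈ EStarSet n z := by
  intro τ hτ
  rcases List.prefix_concat_iff.1 hτ with rfl | hτ
  · exact he
  · exact h τ hτ

lemma EStarSet.append_steps {z : ℕ} {σ : List (Event n)} (h : σ ∈ EStarSet n z)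
    (l : List (Fin n)) : σ ++ l.map Event.step ∈ EStarSet n z := by
  induction l generalizing σ with
  | nil => simpa using h
  | cons p l ih =>
    have := @ih (σ ++ [.step p]) (EStarSet.snoc h (e := .step p) (by
      intro q
      have h1 := h σ (List.prefix_refl σ) q
      have h2 := crashCount_steps q [p]
      simp only [List.map_cons, List.map_nil] at h2
      rw [crashCount_append, stepsBelow_append, h2]
      exact h1.trans (Nat.mul_le_mul_left _ (Nat.le_add_right _ _))))
    simpa using this

/-- A process `p` may crash after a sequence of steps containing a step of a process below
`p`. -/
lemma crash_mem {z : ℕ} (hz : 1 ≤ z) {σ : List (Event n)} (h : σ ∈ EStarSet n z)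
    (l : List (Fin n)) (p : Fin n) (hl : ∃ q ∈ l, q < p) :
    σ ++ l.map Event.step ++ [.crash p] ∈ EStarSet n z := by
  refine EStarSet.snoc (EStarSet.append_steps h l) ?_
  intro q
  have h1 := h σ (List.prefix_refl σ) q
  rw [crashCount_append, crashCount_append, crashCount_steps, stepsBelow_append,
    stepsBelow_append]
  by_cases hq : q = p
  · subst hq
    have hpos : 1 ≤ stepsBelow q (l.map Event.step) := by
      obtain ⟨r, hr, hrq⟩ := hl
      refine List.length_pos_of_mem (a := Event.step r) ?_
      simp [hr, isStepBelow, hrq]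
    have hc : crashCount q [Event.crash q] = 1 := by simp [crashCount]
    have hzn : 1 ≤ z * n := Nat.mul_pos hz (by have := q.isLt; omega)
    rw [hc]
    nlinarith [Nat.mul_le_mul hzn hpos, Nat.zero_le (z * n * stepsBelow q [Event.crash q])]
  · have hc : crashCount q [Event.crash p] = 0 := by simp [crashCount, Ne.symm hq]
    rw [hc]
    nlinarith [Nat.zero_le (z * n * stepsBelow q [Event.crash p]),
      Nat.zero_le (z * n * stepsBelow q (l.map Event.step))]

/-- After `α p_q l c_p`, a decision of the solo run of `p` is the value of the team of `q`. -/
lemma solo_decision {A : Algorithm n} {input : Fin n → Bool} {C : Config A} {z : ℕ}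
    (hz : 1 ≤ z) {α : List (Event n)} (hα : α ∈ EStarSet n z) {q : Fin n} {w : Bool}
    (hq : OnTeam A input C (EStarSet n z) α q w) (l : List (Fin n)) (p : Fin n)
    (hl : ∃ r ∈ q :: l, r < p) (k : ℕ) (u : Bool)
    (hu : A.output p ((run A input (applyEvent A input
      (run A input C (α ++ (q :: l).map Event.step)) (.crash p))
      (List.replicate k (.step p))).pstate p) = some u) : u = w := by
  have hmem := EStarSet.append_steps (crash_mem hz hα (q :: l) p hl) (List.replicate k p)
  have heq : α ++ (q :: l).map Event.step ++ [.crash p] ++ (List.replicate k p).map Event.step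
      = (α ++ [.step q]) ++ (l.map Event.step ++ [.crash p] ++ List.replicate k (.step p)) := by
    simp
  rw [heq] at hmem
  refine hq.2 _ (fun e _ => by cases e <;> trivial) hmem p u ⟨_, List.prefix_refl _, ?_⟩
  rw [← heq, run_append, run_append, List.map_replicate]
  exact hu

end RecoverableConsensus

open RecoverableConsensus in
/-- In the critical-execution setting, with `O` the object every process is
poised to access in `Cα` and `p_{n-1}` on team `¬v`: if `p_i` is on team `v`, `p_j` is on
team `¬v`, `R_i ∈ 𝒮(𝒫 - {p_i})`, `R_j ∈ 𝒮(𝒫 - {p_j})` and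
`value(O, Cα p_i R_i) = value(O, Cα p_j R_j)`, then `p_j = p_{n-1}` and `R_j = ⟨⟩`. -/
theorem same_value_restriction
    (n : ℕ) (hn : 2 ≤ n) (A : Algorithm n) (hA : SolvesRecConsensus A)
    (input : Fin n → Bool) (C : Config A) (z : ℕ) (hz : 1 ≤ z)
    (α : List (Event n)) (hα : α ∈ EStarSet n z)
    (hcrit : Critical A input C (EStarSet n z) α)
    (O : A.ObjIdx) (hO : ∀ p : Fin n, PoisedAt A (run A input C α) p O)
    (v : Bool)
    (hlast : OnTeam A input C (EStarSet n z) α ⟨n - 1, by omega⟩ (!v))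
    (i j : Fin n)
    (hi : OnTeam A input C (EStarSet n z) α i v)
    (hj : OnTeam A input C (EStarSet n z) α j (!v))
    (Ri Rj : List (Event n))
    (hRi : IsSched {k : Fin n | k ≠ i} Ri) (hRj : IsSched {k : Fin n | k ≠ j} Rj)
    (hval : (run A input C (α ++ Event.step i :: Ri)).oval O =
            (run A input C (α ++ Event.step j :: Rj)).oval O) :
    j = (⟨n - 1, by omega⟩ : Fin n) ∧ Rj = [] := by
  obtain ⟨hAg, hVa, hWF⟩ := hA
  obtain ⟨li, hndi, hmi, rfl⟩ := hRi
  obtain ⟨lj, hndj, hmj, rfl⟩ := hRj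
  set p : Fin n := ⟨n - 1, by omega⟩ with hp
  have hlt : ∀ q : Fin n, q ≠ p → q < p := by
    intro q hq
    have h1 : q.val ≠ n - 1 := fun h => hq (Fin.ext h)
    have h2 := q.isLt
    exact Fin.lt_def.2 (show q.val < n - 1 by omega)
  have hdec : ∀ D : Config A, ∃ (k : ℕ) (u : Bool),
      A.output p ((run A input (applyEvent A input D (.crash p))
        (List.replicate k (.step p))).pstate p) = some u := by
    intro D
    obtain ⟨k, u, hku⟩ := hWF input (applyEvent A input D (.crash p)) (fun _ => .step p) p
      (Or.inl (by simp [applyEvent])) (fun m => ⟨m, le_rfl, rfl⟩) ⟨0, fun k _ => by simp⟩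
    refine ⟨k, u, ?_⟩
    simpa [initSeg, List.map_const'] using hku
  -- `p_i ≠ p_{n-1}`: otherwise `α p_{n-1}` would be univalent for both values, but the
  -- step of `p_0` allows a crash of `p_{n-1}`, whose solo run then decides.
  have hip : i ≠ p := by
    intro hip
    have h0 : ∃ r ∈ i :: [(⟨0, by omega⟩ : Fin n)], r < p :=
      ⟨⟨0, by omega⟩, by simp, Fin.lt_def.2 (show 0 < n - 1 by omega)⟩
    obtain ⟨k, u, hu⟩ := hdec
      (run A input C (α ++ (i :: [(⟨0, by omega⟩ : Fin n)]).map Event.step))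
    have h1 := solo_decision hz hα hi _ p h0 k u hu
    have h2 := solo_decision hz hα (hip ▸ hlast) _ p h0 k u hu
    rw [h1] at h2
    cases v <;> simp at h2
  by_contra hcon
  have hbj : ∃ r ∈ j :: lj, r < p := by
    by_cases hjp : j = p
    · rcases lj with _ | ⟨r, l⟩
      · exact absurd ⟨hjp, rfl⟩ hcon
      · have : r ≠ j := hmj r (by simp)
        exact ⟨r, by simp, hlt r (hjp ▸ this)⟩
    · exact ⟨j, by simp, hlt j hjp⟩
  have hbi : ∃ r ∈ i :: li, r < p := ⟨i, by simp, hlt i hip⟩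
  have hoval : (run A input C (α ++ (i :: li).map Event.step)).oval =
      (run A input C (α ++ (j :: lj).map Event.step)).oval := by
    funext o
    by_cases ho : o = O
    · subst ho
      exact hval
    · rw [run_append, run_append,
        run_oval_of_ne A input _ ho (i :: li)
          (List.nodup_cons.2 ⟨fun h => hmi i h rfl, hndi⟩) (fun q _ => hO q),
        run_oval_of_ne A input _ ho (j :: lj)
          (List.nodup_cons.2 ⟨fun h => hmj j h rfl, hndj⟩) (fun q _ => hO q)]
  obtain ⟨k, u, hu⟩ := hdec (run A input C (α ++ (i :: li).map Event.step))
  have h1 := solo_decision hz hα hi li p hbi k u hu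
  rw [run_solo_congr A input p k
    (applyEvent A input (run A input C (α ++ (i :: li).map Event.step)) (.crash p))
    (applyEvent A input (run A input C (α ++ (j :: lj).map Event.step)) (.crash p))
    hoval (by simp [applyEvent])] at hu
  have h2 := solo_decision hz hα hj lj p hbj k u hu
  rw [h1] at h2
  cases v <;> simp at h2
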